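/- A countable union of pluripolar subsets of ℂ^n is pluripolar. -/

import Mathlib

open Metric Set MeasureTheory Filter Topology

noncomputable section

/-- Harmonicity on a set, expressed by continuity together with the circle mean value
property on all closed balls contained in the set. -/
def HarmonicMVP (h : ℂ → ℝ) (s : Set ℂ) : Prop :=
  ContinuousOn h s ∧
  ∀ c : ℂ, ∀ r : ℝ, 0 < r → closedBall c r ⊆ s →
    h c = (2 * Real.pi)⁻¹ *
      ∫ θ in (0:ℝ)..(2 * Real.pi), h (c + r * Complex.exp (θ * Complex.I))

/-- Subharmonicity of a `[-∞, ∞)`-valued function (modeled as `EReal`-valued) on a set: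
upper semicontinuity together with the harmonic majorant property: on every closed ball
contained in the set, `u` is dominated on the ball by every harmonic function dominating
it on the bounding circle. -/
def SubharmonicOn (u : ℂ → EReal) (U : Set ℂ) : Prop :=
  UpperSemicontinuousOn u U ∧ (∀ z ∈ U, u z < ⊤) ∧
  ∀ c : ℂ, ∀ r : ℝ, 0 < r → closedBall c r ⊆ U →
    ∀ h : ℂ → ℝ, HarmonicMVP h (closedBall c r) →
      (∀ z ∈ sphere c r, u z ≤ (h z : EReal)) →
      ∀ z ∈ ball c r, u z ≤ (h z : EReal)

/-- A set `E ⊆ ℂ` is polar if it is contained in the `-∞` set of a subharmonic function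
on `ℂ` which is not identically `-∞`. -/
def PolarSet (E : Set ℂ) : Prop :=
  ∃ u : ℂ → EReal, SubharmonicOn u Set.univ ∧ ¬ (∀ z, u z = ⊥) ∧ ∀ z ∈ E, u z = ⊥

/-- Plurisubharmonicity on a subset of `ℂⁿ`: upper semicontinuity together with
subharmonicity of the restriction to every complex line. -/
def PlurisubharmonicOn {n : ℕ} (φ : (Fin n → ℂ) → EReal) (Ω : Set (Fin n → ℂ)) : Prop :=
  UpperSemicontinuousOn φ Ω ∧
  ∀ a b : Fin n → ℂ,
    SubharmonicOn (fun z : ℂ => φ (a + z • b)) {z : ℂ | a + z • b ∈ Ω}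

/-- A set `E ⊆ ℂⁿ` is pluripolar (global form, equivalent to the local one by
Josefson's theorem): it is contained in the `-∞` set of a plurisubharmonic function on
`ℂⁿ` which is not identically `-∞`. -/
def Pluripolar {n : ℕ} (E : Set (Fin n → ℂ)) : Prop :=
  ∃ φ : (Fin n → ℂ) → EReal, PlurisubharmonicOn φ Set.univ ∧
    ¬ (∀ z, φ z = ⊥) ∧ ∀ z ∈ E, φ z = ⊥

/-- The pluripolar hull `E*_Ω` of `E` relative to `Ω`. -/
def PluripolarHull {n : ℕ} (E Ω : Set (Fin n → ℂ)) : Set (Fin n → ℂ) :=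
  {z ∈ Ω | ∀ φ : (Fin n → ℂ) → EReal, PlurisubharmonicOn φ Ω →
    (∀ w ∈ E, φ w = ⊥) → φ z = ⊥}


lemma HarmonicMVP.circle_integrable {h : ℂ → ℝ} {s : Set ℂ} (hh : HarmonicMVP h s) {c : ℂ} {r : ℝ}
    (hr : 0 < r) (hs : closedBall c r ⊆ s) :
    IntervalIntegrable (fun θ : ℝ => h (c + r * Complex.exp (θ * Complex.I))) volume
      0 (2 * Real.pi) := by
  apply Continuous.intervalIntegrable
  refine (hh.1.mono hs).comp_continuous (by fun_prop) ?_
  intro θ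
  simp [Complex.norm_exp_ofReal_mul_I, abs_of_pos hr]

lemma HarmonicMVP.add {h p : ℂ → ℝ} {s : Set ℂ} (hh : HarmonicMVP h s) (hp : HarmonicMVP p s) :
    HarmonicMVP (fun z => h z + p z) s := by
  refine ⟨hh.1.add hp.1, fun c r hr hs => ?_⟩
  beta_reduce
  rw [intervalIntegral.integral_add (hh.circle_integrable hr hs) (hp.circle_integrable hr hs),
    hh.2 c r hr hs, hp.2 c r hr hs]
  ring

lemma HarmonicMVP.const_mul {h : ℂ → ℝ} {s : Set ℂ} (hh : HarmonicMVP h s) (k : ℝ) :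
    HarmonicMVP (fun z => k * h z) s := by
  refine ⟨continuousOn_const.mul hh.1, fun c r hr hs => ?_⟩
  beta_reduce
  rw [intervalIntegral.integral_const_mul, hh.2 c r hr hs]
  ring

lemma HarmonicMVP.const (k : ℝ) (s : Set ℂ) : HarmonicMVP (fun _ => k) s := by
  refine ⟨continuousOn_const, fun c r hr hs => ?_⟩
  have := Real.pi_pos
  simp
  field_simp

lemma HarmonicMVP.re_of_differentiable {f : ℂ → ℂ} (hf : Differentiable ℂ f) (s : Set ℂ) :
    HarmonicMVP (fun z => (f z).re) s := by
  refine ⟨(Complex.continuous_re.comp hf.continuous).continuousOn, fun c r hr hs => ?_⟩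
  have h1 : InnerProductSpace.HarmonicOnNhd (fun z => (f z).re) (closedBall c |r|) := by
    intro z _
    exact AnalyticAt.harmonicAt_re (hf.analyticAt z)
  have h2 := h1.circleAverage_eq
  beta_reduce
  rw [← h2, Real.circleAverage_def]
  simp [circleMap]

/-- trigonometric polynomials are real parts of polynomials on the circle -/
lemma exists_poly_of_mem_span (g : C(AddCircle (1:ℝ), ℂ))
    (hg : g ∈ Submodule.span ℂ (range (@fourier (1:ℝ)))) :
    ∃ P : Polynomial ℂ, ∀ x : AddCircle (1:ℝ),
      (g x).re = (P.eval ((AddCircle.toCircle x : Circle) : ℂ)).re := by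
  suffices H : ∃ P Q : Polynomial ℂ, ∀ x : AddCircle (1:ℝ),
      g x = P.eval ((AddCircle.toCircle x : Circle) : ℂ)
        + (starRingEnd ℂ) (Q.eval ((AddCircle.toCircle x : Circle) : ℂ)) by
    obtain ⟨P, Q, h⟩ := H
    refine ⟨P + Q, fun x => ?_⟩
    rw [h]; simp
  induction hg using Submodule.span_induction with
  | mem g hg =>
    obtain ⟨n, rfl⟩ := hg
    rcases Int.eq_nat_or_neg n with ⟨k, rfl | rfl⟩
    · refine ⟨Polynomial.X ^ k, 0, fun x => ?_⟩
      simp [fourier_apply, AddCircle.toCircle_nsmul]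
    · refine ⟨0, Polynomial.X ^ k, fun x => ?_⟩
      rw [fourier_neg]
      simp [fourier_apply, AddCircle.toCircle_nsmul]
  | zero => exact ⟨0, 0, fun x => by simp⟩
  | add f g _ _ hf hg =>
    obtain ⟨P, Q, h⟩ := hf
    obtain ⟨P', Q', h'⟩ := hg
    refine ⟨P + P', Q + Q', fun x => ?_⟩
    rw [ContinuousMap.add_apply, h, h']
    simp; ring
  | smul a f _ hf =>
    obtain ⟨P, Q, h⟩ := hf
    refine ⟨Polynomial.C a * P, Polynomial.C ((starRingEnd ℂ) a) * Q, fun x => ?_⟩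
    rw [ContinuousMap.smul_apply, h]
    simp; ring

lemma exists_harmonic_approx (f : ℂ → ℝ) (c : ℂ) (r : ℝ) (hr : 0 < r)
    (hf : ContinuousOn f (sphere c r)) (ε : ℝ) (hε : 0 < ε) :
    ∃ F : ℂ → ℝ, Continuous F ∧ (∀ s, HarmonicMVP F s) ∧
      ∀ z ∈ sphere c r, |F z - f z| ≤ ε := by
  have : Fact (0 < (1:ℝ)) := ⟨one_pos⟩
  have hmem : ∀ x : AddCircle (1:ℝ),
      c + r * ((AddCircle.toCircle x : Circle) : ℂ) ∈ sphere c r := by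
    intro x
    have := Circle.norm_coe (AddCircle.toCircle x)
    rw [mem_sphere, dist_eq_norm, add_sub_cancel_left, norm_mul, this]
    simp [abs_of_pos hr]
  have hcont : Continuous fun x : AddCircle (1:ℝ) =>
      ((f (c + r * ((AddCircle.toCircle x : Circle) : ℂ)) : ℝ) : ℂ) := by
    refine Complex.continuous_ofReal.comp (hf.comp_continuous ?_ hmem)
    have := AddCircle.continuous_toCircle (T := (1:ℝ))
    fun_prop
  let g : C(AddCircle (1:ℝ), ℂ) := ⟨_, hcont⟩
  have hgm : g ∈ (Submodule.span ℂ (range (@fourier (1:ℝ)))).topologicalClosure := by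
    rw [span_fourier_closure_eq_top]; trivial
  have hgm' : g ∈ closure ((Submodule.span ℂ (range (@fourier (1:ℝ))) : Set _)) := hgm
  obtain ⟨q, hq, hqd⟩ := Metric.mem_closure_iff.1 hgm' ε hε
  obtain ⟨P, hP⟩ := exists_poly_of_mem_span q hq
  have hd : Differentiable ℂ (fun z : ℂ => P.eval ((z - c) / r)) := by
    apply P.differentiable.comp
    fun_prop
  refine ⟨fun z => (P.eval ((z - c) / r)).re, Complex.continuous_re.comp hd.continuous,
    fun s => HarmonicMVP.re_of_differentiable hd s, fun z hz => ?_⟩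
  have hw : ‖(z - c) / r‖ = 1 := by
    rw [mem_sphere, dist_eq_norm] at hz
    simp [hz, abs_of_pos hr, hr.ne']
  obtain ⟨x, hx⟩ := (AddCircle.homeomorphCircle (one_ne_zero : (1:ℝ) ≠ 0)).surjective
    ⟨(z - c) / r, by simpa [Submonoid.unitSphere] using hw⟩
  rw [AddCircle.homeomorphCircle_apply] at hx
  have hx' : ((AddCircle.toCircle x : Circle) : ℂ) = (z - c) / r := by rw [hx]
  have hr' : (r : ℂ) ≠ 0 := by exact_mod_cast hr.ne'
  have h1 : g x = (f z : ℂ) := by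
    change ((f (c + r * ((AddCircle.toCircle x : Circle) : ℂ)) : ℝ) : ℂ) = _
    rw [hx']; congr 2; field_simp; ring
  simp only
  rw [← hx', ← hP x]
  have h2 : dist (g x) (q x) ≤ dist g q := ContinuousMap.dist_apply_le_dist x
  have h3 : |(q x - g x).re| ≤ ‖q x - g x‖ := Complex.abs_re_le_norm _
  rw [dist_comm, dist_eq_norm] at h2
  rw [h1] at h2 h3
  simp at h3
  linarith

lemma ereal_scale_le {e : EReal} {t m x : ℝ} (ht : 0 < t) :
    (t : EReal) * e + (m : EReal) ≤ (x : EReal) ↔ e ≤ (((x - m) / t : ℝ) : EReal) := by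
  induction e using EReal.rec with
  | bot => simp [EReal.coe_mul_bot_of_pos ht]
  | top => simp [EReal.coe_mul_top_of_pos ht]
  | coe y =>
    norm_cast
    rw [le_div_iff₀ ht]
    constructor <;> intro h <;> linarith

lemma ereal_scale_lt_top {e : EReal} {t m : ℝ} (ht : 0 < t) (he : e < ⊤) :
    (t : EReal) * e + (m : EReal) < ⊤ := by
  induction e using EReal.rec with
  | bot => simp [EReal.coe_mul_bot_of_pos ht]
  | top => exact absurd he (lt_irrefl _)
  | coe y => norm_cast; exact EReal.coe_lt_top _

lemma ereal_scale_continuous (t m : ℝ) (ht : 0 < t) :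
    Continuous (fun e : EReal => (t : EReal) * e + (m : EReal)) := by
  rw [continuous_iff_continuousAt]
  intro e
  have h1 : ContinuousAt (fun e : EReal => (t : EReal) * e) e :=
    EReal.Tendsto.const_mul tendsto_id (Or.inl (EReal.coe_ne_bot t)) (Or.inl (EReal.coe_ne_top t))
  exact (EReal.continuousAt_add (p := ((t : EReal) * e, (m : EReal)))
    (Or.inr (by simp)) (Or.inr (by simp))).comp₂ h1 continuousAt_const

lemma ereal_scale_mono (t m : ℝ) (ht : 0 < t) :
    Monotone (fun e : EReal => (t : EReal) * e + (m : EReal)) := by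
  intro a b hab
  have h0 : (0 : EReal) ≤ t := by exact_mod_cast ht.le
  exact add_le_add (mul_le_mul_of_nonneg_left hab h0) le_rfl

lemma usc_scale {X : Type*} [TopologicalSpace X] {u : X → EReal} (hu : UpperSemicontinuous u)
    (t m : ℝ) (ht : 0 < t) : UpperSemicontinuous (fun z => (t : EReal) * u z + (m : EReal)) :=
  (ereal_scale_continuous t m ht).comp_upperSemicontinuous hu (ereal_scale_mono t m ht)

lemma usc_add {X : Type*} [TopologicalSpace X] {u v : X → EReal} (hu : UpperSemicontinuous u)
    (hv : UpperSemicontinuous v) (hu' : ∀ z, u z < ⊤) (hv' : ∀ z, v z < ⊤) :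
    UpperSemicontinuous (fun z => u z + v z) :=
  hu.add' hv fun z => EReal.continuousAt_add (Or.inl (hu' z).ne) (Or.inr (hv' z).ne)

lemma SubharmonicOn.scale {u : ℂ → EReal} (hu : SubharmonicOn u univ) (t m : ℝ) (ht : 0 < t) :
    SubharmonicOn (fun z => (t : EReal) * u z + (m : EReal)) univ := by
  refine ⟨(usc_scale (upperSemicontinuousOn_univ_iff.1 hu.1) t m ht).upperSemicontinuousOn _,
    fun z hz => ereal_scale_lt_top ht (hu.2.1 z hz), fun c r hr hs h hh hle z hz => ?_⟩
  beta_reduce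
  rw [ereal_scale_le ht]
  refine hu.2.2 c r hr hs (fun z => (h z - m) / t) ?_ (fun w hw => ?_) z hz
  · have := (hh.add (HarmonicMVP.const (-m) _)).const_mul t⁻¹
    convert this using 2
    field_simp
    ring
  · exact (ereal_scale_le ht).1 (hle w hw)

lemma ereal_le_of_eps {e : EReal} {x C : ℝ}
    (h : ∀ ε : ℝ, 0 < ε → e ≤ ((x + C * ε : ℝ) : EReal)) : e ≤ (x : EReal) := by
  induction e using EReal.rec with
  | bot => simp
  | top => exact absurd (top_le_iff.1 (h 1 one_pos)) (EReal.coe_ne_top _)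
  | coe y =>
    norm_cast at h ⊢
    by_contra! hc
    have h1 := h ((y - x) / (2 * (|C| + 1))) (by
      have := abs_nonneg C
      apply div_pos <;> linarith)
    have h2 : C * ((y - x) / (2 * (|C| + 1))) < y - x := by
      have hC := abs_nonneg C
      have hC' := le_abs_self C
      rw [← mul_div_assoc, div_lt_iff₀ (by linarith)]
      nlinarith
    linarith

lemma ereal_split {a b : EReal} {x ε : ℝ} (ha : a < ⊤) (hb : b < ⊤) (hε : 0 < ε)
    (h : a + b ≤ (x : EReal)) :
    ∃ s : ℝ, a < (s : EReal) ∧ b < ((x + ε - s : ℝ) : EReal) := by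
  induction b using EReal.rec with
  | bot =>
    obtain ⟨s, hs, -⟩ := EReal.lt_iff_exists_real_btwn.1 ha
    exact ⟨s, hs, EReal.bot_lt_coe _⟩
  | top => exact absurd hb (lt_irrefl _)
  | coe b =>
    refine ⟨x - b + ε / 2, ?_, ?_⟩
    · induction a using EReal.rec with
      | bot => exact EReal.bot_lt_coe _
      | top => exact absurd ha (lt_irrefl _)
      | coe a => norm_cast at h ⊢; linarith
    · norm_cast; linarith

lemma SubharmonicOn.add {u v : ℂ → EReal} (hu : SubharmonicOn u univ)
    (hv : SubharmonicOn v univ) : SubharmonicOn (fun z => u z + v z) univ := by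
  have hu1 := upperSemicontinuousOn_univ_iff.1 hu.1
  have hv1 := upperSemicontinuousOn_univ_iff.1 hv.1
  have hu2 := fun z => hu.2.1 z (mem_univ z)
  have hv2 := fun z => hv.2.1 z (mem_univ z)
  refine ⟨(usc_add hu1 hv1 hu2 hv2).upperSemicontinuousOn _,
    fun z hz => EReal.add_lt_top (hu2 z).ne (hv2 z).ne, fun c r hr hs h hh hle z hz => ?_⟩
  have hhc : Continuous fun y : sphere c r => h y :=
    (hh.1.mono sphere_subset_closedBall).domRestrict
  refine ereal_le_of_eps (C := 3) fun ε hε => ?_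
  obtain ⟨g, hg⟩ := exists_continuous_forall_mem_convex_of_local_const
    (X := sphere c r) (E := ℝ)
    (t := fun y => {s : ℝ | u y < (s : EReal) ∧ v y < ((h y + ε - s : ℝ) : EReal)})
    (fun y => by
      apply Set.OrdConnected.convex
      refine ⟨fun a ha b hb s hs => ⟨ha.1.trans_le (by exact_mod_cast hs.1),
        hb.2.trans_le ?_⟩⟩
      have := hs.2
      norm_cast; linarith)
    (fun y => by
      obtain ⟨s, hs1, hs2⟩ := ereal_split (hu2 y) (hv2 y) hε (hle y y.2)
      refine ⟨s, ?_⟩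
      obtain ⟨b, hb1, hb2⟩ := EReal.lt_iff_exists_real_btwn.1 hs2
      have e1 : ∀ᶠ w : sphere c r in 𝓝 y, u w < s :=
        continuous_subtype_val.continuousAt.eventually (hu1 y s hs1)
      have e2 : ∀ᶠ w : sphere c r in 𝓝 y, v w < b :=
        continuous_subtype_val.continuousAt.eventually (hv1 y b hb1)
      have e3 : ∀ᶠ w : sphere c r in 𝓝 y, b < h w + ε - s :=
        ((hhc.add continuous_const).sub continuous_const).continuousAt.eventually
          (lt_mem_nhds (by exact_mod_cast hb2))
      filter_upwards [e1, e2, e3] with w h1 h2 h3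
      exact ⟨h1, h2.trans (by exact_mod_cast h3)⟩)
  obtain ⟨f, hf⟩ := g.exists_restrict_eq isClosed_sphere
  have hfg : ∀ w (hw : w ∈ sphere c r), f w = g ⟨w, hw⟩ := fun w hw => by
    rw [← hf]; rfl
  obtain ⟨F, -, hF, hFf⟩ := exists_harmonic_approx f c r hr f.continuous.continuousOn ε hε
  have h1 : u z ≤ ((F z + ε : ℝ) : EReal) :=
    hu.2.2 c r hr hs (fun z => F z + ε) ((hF _).add (HarmonicMVP.const ε _)) (fun w hw => by
      refine (hg ⟨w, hw⟩).1.le.trans ?_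
      have := abs_le.1 (hFf w hw)
      rw [hfg w hw] at this
      norm_cast; linarith [this.1]) z hz
  have h2 : v z ≤ ((h z + 2 * ε + (-1) * F z : ℝ) : EReal) :=
    hv.2.2 c r hr hs (fun z => h z + 2 * ε + (-1) * F z)
      ((hh.add (HarmonicMVP.const (2 * ε) _)).add ((hF _).const_mul (-1))) (fun w hw => by
      refine (hg ⟨w, hw⟩).2.le.trans ?_
      have := abs_le.1 (hFf w hw)
      rw [hfg w hw] at this
      rw [EReal.coe_le_coe_iff]; linarith [this.2]) z hz
  calc u z + v z ≤ ((F z + ε : ℝ) : EReal) + ((h z + 2 * ε + (-1) * F z : ℝ) : EReal) :=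
        add_le_add h1 h2
    _ = ((h z + 3 * ε : ℝ) : EReal) := by rw [← EReal.coe_add]; congr 1; ring

lemma SubharmonicOn.limit {S : ℕ → ℂ → EReal} {u : ℂ → EReal}
    (hS : ∀ k, SubharmonicOn (S k) univ) (hu : UpperSemicontinuous u)
    (H : ∀ (c : ℂ) (r : ℝ), ∃ N : ℕ, ∀ z ∈ closedBall c r,
      Antitone (fun k => S (N + k) z) ∧ u z = ⨅ k, S (N + k) z) :
    SubharmonicOn u univ := by
  refine ⟨hu.upperSemicontinuousOn _, fun z _ => ?_, fun c r hr hs h hh hle z hz => ?_⟩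
  · obtain ⟨N, hN⟩ := H z 1
    rw [(hN z (mem_closedBall_self zero_le_one)).2]
    exact (iInf_le _ 0).trans_lt ((hS _).2.1 z (mem_univ z))
  obtain ⟨N, hN⟩ := H c r
  refine ereal_le_of_eps (C := 1) fun ε hε => ?_
  have hcov : ∃ K : ℕ, ∀ k ≥ K, ∀ y ∈ sphere c r ∩ sphere c r,
      S (N + k) y ≤ ((h y + ε : ℝ) : EReal) := by
    refine (isCompact_sphere c r).induction_on
      (p := fun s => ∃ K : ℕ, ∀ k ≥ K, ∀ y ∈ s ∩ sphere c r,
        S (N + k) y ≤ ((h y + ε : ℝ) : EReal)) ?_ ?_ ?_ ?_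
    · exact ⟨0, fun k _ y hy => absurd hy.1 (notMem_empty y)⟩
    · rintro s t hst ⟨K, hK⟩
      exact ⟨K, fun k hk y hy => hK k hk y ⟨hst hy.1, hy.2⟩⟩
    · rintro s t ⟨K, hK⟩ ⟨K', hK'⟩
      refine ⟨max K K', fun k hk y hy => ?_⟩
      rcases hy.1 with h1 | h1
      · exact hK k ((le_max_left _ _).trans hk) y ⟨h1, hy.2⟩
      · exact hK' k ((le_max_right _ _).trans hk) y ⟨h1, hy.2⟩
    · intro x hx
      have hlt : u x < ((h x + ε : ℝ) : EReal) :=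
        (hle x hx).trans_lt (by norm_cast; linarith)
      rw [(hN x (sphere_subset_closedBall hx)).2, iInf_lt_iff] at hlt
      obtain ⟨K, hK⟩ := hlt
      obtain ⟨b, hb1, hb2⟩ := EReal.lt_iff_exists_real_btwn.1 hK
      have e1 : ∀ᶠ y in 𝓝[sphere c r] x, S (N + K) y < b :=
        nhdsWithin_le_nhds (upperSemicontinuousOn_univ_iff.1 (hS (N + K)).1 x b hb1)
      have e2 : ∀ᶠ y in 𝓝[sphere c r] x, b < h y + ε :=
        (((hh.1.mono sphere_subset_closedBall).add continuousOn_const) x hx).eventually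
          (lt_mem_nhds (by exact_mod_cast hb2))
      refine ⟨{y | S (N + K) y < b ∧ b < h y + ε}, e1.and e2, K, fun k hk y hy => ?_⟩
      refine ((hN y (sphere_subset_closedBall hy.2)).1 hk).trans (hy.1.1.le.trans ?_)
      exact_mod_cast hy.1.2.le
  obtain ⟨K, hK⟩ := hcov
  rw [(hN z (ball_subset_closedBall hz)).2]
  refine (iInf_le _ K).trans ?_
  have := (hS (N + K)).2.2 c r hr hs (fun z => h z + ε) (hh.add (HarmonicMVP.const ε _))
    (fun w hw => hK K le_rfl w ⟨hw, hw⟩) z hz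
  simpa using this

lemma SubharmonicOn.submean {u : ℂ → EReal} (hu : SubharmonicOn u univ) {f : ℂ → ℝ}
    (hf : Continuous f) {c : ℂ} (hle : ∀ z ∈ sphere c 1, u z ≤ (f z : EReal)) :
    u c ≤ (((2 * Real.pi)⁻¹ *
      ∫ θ in (0:ℝ)..(2 * Real.pi), f (c + Complex.exp (θ * Complex.I)) : ℝ) : EReal) := by
  refine ereal_le_of_eps (C := 2) fun ε hε => ?_
  obtain ⟨F, hFc, hF, hFf⟩ := exists_harmonic_approx f c 1 one_pos hf.continuousOn ε hε
  have h1 : u c ≤ ((F c + ε : ℝ) : EReal) :=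
    hu.2.2 c 1 one_pos (subset_univ _) (fun z => F z + ε)
      ((hF _).add (HarmonicMVP.const ε _)) (fun w hw => by
      refine (hle w hw).trans ?_
      have := abs_le.1 (hFf w hw)
      norm_cast; linarith [this.1]) c (mem_ball_self one_pos)
  refine h1.trans ?_
  have h2 := (hF univ).2 c 1 one_pos (subset_univ _)
  have hpi := Real.pi_pos
  have h3 : ∫ θ in (0:ℝ)..(2 * Real.pi), F (c + Complex.exp (θ * Complex.I)) ≤
      ∫ θ in (0:ℝ)..(2 * Real.pi), (f (c + Complex.exp (θ * Complex.I)) + ε) := by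
    apply intervalIntegral.integral_mono_on (by positivity)
    · apply Continuous.intervalIntegrable; fun_prop
    · apply Continuous.intervalIntegrable; fun_prop
    · intro θ _
      have := abs_le.1 (hFf (c + Complex.exp (θ * Complex.I))
        (by simp [Complex.norm_exp_ofReal_mul_I]))
      linarith [this.2]
  rw [intervalIntegral.integral_add (by apply Continuous.intervalIntegrable; fun_prop)
    (by apply Continuous.intervalIntegrable; fun_prop)] at h3
  simp only [Complex.ofReal_one, one_mul] at h2
  simp only [intervalIntegral.integral_const, sub_zero, smul_eq_mul] at h3
  have h4 := mul_le_mul_of_nonneg_left h3 (by positivity : 0 ≤ (2 * Real.pi)⁻¹)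
  have h5 : (2 * Real.pi)⁻¹ * (2 * Real.pi * ε) = ε := by field_simp
  rw [← h2, mul_add, h5] at h4
  norm_cast
  linarith

lemma SubharmonicOn.circle_null {u : ℂ → EReal} (hu : SubharmonicOn u univ) {c : ℂ}
    (hc : u c ≠ ⊥) :
    ∀ᵐ θ ∂(volume.restrict (Ioc 0 (2 * Real.pi))),
      u (c + Complex.exp ((θ : ℝ) * Complex.I)) ≠ ⊥ := by
  have hu1 := upperSemicontinuousOn_univ_iff.1 hu.1
  set e : ℝ → ℂ := fun θ => c + Complex.exp (θ * Complex.I) with he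
  have hec : Continuous e := by fun_prop
  set μ : Measure ℂ := (volume.restrict (Ioc 0 (2 * Real.pi))).map e with hμ
  have hfin : IsFiniteMeasure μ := by
    rw [hμ]; exact Measure.isFiniteMeasure_map _ _
  have hm : MeasurableSet {z | u z = ⊥} := hu1.measurable (measurableSet_singleton ⊥)
  suffices hz : μ {z | u z = ⊥} = 0 by
    rw [hμ, Measure.map_apply hec.measurable hm] at hz
    rw [ae_iff]
    simpa using hz
  by_contra hne
  obtain ⟨K, hKs, hK, hK0⟩ := hm.exists_lt_isCompact (pos_iff_ne_zero.2 hne)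
  set δ : ℝ := μ.real K with hδ
  have hδ0 : 0 < δ := ENNReal.toReal_pos hK0.ne' (measure_ne_top _ _)
  -- bound on the sphere
  obtain ⟨w, hw, hwmax⟩ := UpperSemicontinuousOn.exists_isMaxOn
    (NormedSpace.sphere_nonempty (x := c) (r := (1:ℝ)).2 zero_le_one) (isCompact_sphere c 1)
    (hu1.upperSemicontinuousOn _)
  obtain ⟨M, hM, -⟩ := EReal.lt_iff_exists_real_btwn.1 (hu.2.1 w (mem_univ w))
  have hpi := Real.pi_pos
  have key : ∀ k : ℝ, 0 ≤ M + k → u c ≤ ((M - (2 * Real.pi)⁻¹ * (M + k) * δ : ℝ) : EReal) := by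
    intro k hk
    obtain ⟨g, hg0, hg1, hg⟩ := exists_continuous_zero_one_of_isCompact' hK
      (hu1.isClosed_preimage ((-k : ℝ) : EReal)) (by
        rw [Set.disjoint_left]
        intro z hz hz'
        have h1 : u z = ⊥ := hKs hz
        simp only [mem_preimage, mem_Ici, h1] at hz'
        simp at hz')
    have h1 := hu.submean (f := fun z => M - (M + k) * g z) (c := c) (by fun_prop) (by
      intro z hz
      by_cases hz' : u z < ((-k : ℝ) : EReal)
      · refine hz'.le.trans ?_
        norm_cast
        nlinarith [(hg z).1, (hg z).2]
      · have : g z = 0 := hg0 (not_lt.1 hz')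
        rw [this]
        have h2 : u z ≤ u w := hwmax hz
        simpa using h2.trans hM.le)
    refine h1.trans ?_
    rw [intervalIntegral.integral_sub (by simp)
      (by apply Continuous.intervalIntegrable; fun_prop), intervalIntegral.integral_const_mul]
    simp only [intervalIntegral.integral_const, sub_zero, smul_eq_mul]
    have h3 : δ ≤ ∫ θ in (0:ℝ)..(2 * Real.pi), g (c + Complex.exp (θ * Complex.I)) := by
      rw [intervalIntegral.integral_of_le (by positivity)]
      have : ∫ θ in Ioc 0 (2 * Real.pi), g (e θ) = ∫ z, g z ∂μ := by
        rw [hμ, integral_map hec.aemeasurable g.continuous.aestronglyMeasurable]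
      change δ ≤ ∫ θ in Ioc 0 (2 * Real.pi), g (e θ)
      rw [this, hδ, ← integral_indicator_one hK.measurableSet]
      apply integral_mono
      · exact (integrable_const (1:ℝ)).indicator hK.measurableSet
      · refine Integrable.of_bound g.continuous.aestronglyMeasurable 1 (ae_of_all _ fun z => ?_)
        rw [Real.norm_eq_abs, abs_of_nonneg (hg z).1]; exact (hg z).2
      · intro z
        by_cases hz : z ∈ K
        · simp [hz, hg1 hz]
        · simp [hz, (hg z).1]
    norm_cast
    have h4 : (2 * Real.pi)⁻¹ * (2 * Real.pi * M) = M := by field_simp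
    rw [mul_sub, h4]
    have h5 : 0 ≤ (2 * Real.pi)⁻¹ * (M + k) := by positivity
    nlinarith [mul_le_mul_of_nonneg_left h3 h5]
  obtain ⟨b, hb, hb'⟩ := EReal.lt_iff_exists_real_btwn.1 (bot_lt_iff_ne_bot.2 hc)
  have h6 := key ((|M - b|) * (2 * Real.pi) / δ - M) (by
    have := abs_nonneg (M - b)
    ring_nf; positivity)
  have h7 := hb'.trans_le h6
  norm_cast at h7
  have h8 : (2 * Real.pi)⁻¹ * (M + ((|M - b|) * (2 * Real.pi) / δ - M)) * δ = |M - b| := by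
    field_simp; ring
  rw [h8] at h7
  linarith [le_abs_self (M - b)]

lemma PlurisubharmonicOn.usc {n : ℕ} {φ : (Fin n → ℂ) → EReal}
    (h : PlurisubharmonicOn φ univ) : UpperSemicontinuous φ :=
  upperSemicontinuousOn_univ_iff.1 h.1

lemma PlurisubharmonicOn.line {n : ℕ} {φ : (Fin n → ℂ) → EReal}
    (h : PlurisubharmonicOn φ univ) (a b : Fin n → ℂ) :
    SubharmonicOn (fun z : ℂ => φ (a + z • b)) univ := by
  simpa using h.2 a b

lemma plurisubharmonicOn_univ_of {n : ℕ} {φ : (Fin n → ℂ) → EReal}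
    (h1 : UpperSemicontinuous φ)
    (h2 : ∀ a b : Fin n → ℂ, SubharmonicOn (fun z : ℂ => φ (a + z • b)) univ) :
    PlurisubharmonicOn φ univ :=
  ⟨h1.upperSemicontinuousOn _, fun a b => by simpa using h2 a b⟩

lemma PlurisubharmonicOn.lt_top {n : ℕ} {φ : (Fin n → ℂ) → EReal}
    (h : PlurisubharmonicOn φ univ) (a : Fin n → ℂ) : φ a < ⊤ := by
  simpa using (h.line a 0).2.1 0 (mem_univ 0)

lemma PlurisubharmonicOn.add {n : ℕ} {φ ψ : (Fin n → ℂ) → EReal}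
    (h : PlurisubharmonicOn φ univ) (h' : PlurisubharmonicOn ψ univ) :
    PlurisubharmonicOn (fun z => φ z + ψ z) univ :=
  plurisubharmonicOn_univ_of (usc_add h.usc h'.usc h.lt_top h'.lt_top)
    fun a b => (h.line a b).add (h'.line a b)

lemma PlurisubharmonicOn.scale {n : ℕ} {φ : (Fin n → ℂ) → EReal}
    (h : PlurisubharmonicOn φ univ) (t m : ℝ) (ht : 0 < t) :
    PlurisubharmonicOn (fun z => (t : EReal) * φ z + (m : EReal)) univ :=
  plurisubharmonicOn_univ_of (usc_scale h.usc t m ht) fun a b => (h.line a b).scale t m ht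

lemma PlurisubharmonicOn.null {n : ℕ} {φ : (Fin n → ℂ) → EReal}
    (h : PlurisubharmonicOn φ univ) {a : Fin n → ℂ} (ha : φ a ≠ ⊥) :
    ∀ᵐ z, φ z ≠ ⊥ := by
  have hpi := Real.pi_pos
  set ν : Measure ℝ := volume.restrict (Ioc 0 (2 * Real.pi)) with hν
  have hν0 : ν ≠ 0 := by
    intro h0
    have : ν univ = 0 := by rw [h0]; simp
    rw [hν, Measure.restrict_apply_univ, Real.volume_Ioc] at this
    simp at this
    linarith
  have hm : MeasurableSet {p : (Fin n → ℂ) × ℝ |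
      φ (a + Complex.exp (p.2 * Complex.I) • p.1) ≠ ⊥} := by
    have hc : Continuous fun p : (Fin n → ℂ) × ℝ =>
      a + Complex.exp (p.2 * Complex.I) • p.1 := by fun_prop
    exact (h.usc.measurable.comp hc.measurable) (measurableSet_singleton ⊥).compl
  have h1 : ∀ᵐ b : Fin n → ℂ, ∀ᵐ θ ∂ν, φ (a + Complex.exp ((θ : ℝ) * Complex.I) • b) ≠ ⊥ := by
    refine ae_of_all _ fun b => ?_
    have := (h.line a b).circle_null (c := 0) (by simpa using ha)
    simpa only [zero_add] using this
  rw [Measure.ae_ae_comm hm] at h1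
  have : NeBot (ae ν) := ae_neBot.2 hν0
  obtain ⟨θ, hθ⟩ := h1.exists
  set w := Complex.exp (θ * Complex.I) with hw
  have hw0 : w ≠ 0 := Complex.exp_ne_zero _
  have hq : Measure.QuasiMeasurePreserving (fun z : Fin n → ℂ => w⁻¹ • (z - a)) := by
    have e1 : Measure.QuasiMeasurePreserving (fun z : Fin n → ℂ => z - a) :=
      (measurePreserving_sub_right volume a).quasiMeasurePreserving
    have e2 : Measure.QuasiMeasurePreserving (fun z : Fin n → ℂ => w⁻¹ • z) := by
      set L : (Fin n → ℂ) →ₗ[ℝ] (Fin n → ℂ) :=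
        (LinearMap.lsmul ℂ (Fin n → ℂ) w⁻¹).restrictScalars ℝ with hL
      set L' : (Fin n → ℂ) →ₗ[ℝ] (Fin n → ℂ) :=
        (LinearMap.lsmul ℂ (Fin n → ℂ) w).restrictScalars ℝ with hL'
      have hLL : L ∘ₗ L' = LinearMap.id := by
        refine LinearMap.ext fun z => ?_
        simp [hL, hL', smul_smul, hw0]
      have hdet : LinearMap.det L ≠ 0 := by
        intro h0
        have h2 := congrArg LinearMap.det hLL
        rw [LinearMap.det_comp, h0, LinearMap.det_id, zero_mul] at h2
        exact zero_ne_one h2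
      exact Measure.LinearMap.quasiMeasurePreserving volume L hdet
    exact e2.comp e1
  filter_upwards [hq.ae hθ] with z hz
  simpa [smul_smul, hw0] using hz

lemma PlurisubharmonicOn.normalize {n : ℕ} {φ : (Fin n → ℂ) → EReal}
    (h : PlurisubharmonicOn φ univ) {a : Fin n → ℂ} (ha : φ a ≠ ⊥) (R : ℝ) (δ : ℝ) (hδ : 0 < δ) :
    ∃ ψ : (Fin n → ℂ) → EReal, PlurisubharmonicOn ψ univ ∧ (∀ z ∈ closedBall 0 R, ψ z ≤ 0) ∧
      ((-δ : ℝ) : EReal) ≤ ψ a ∧ ∀ z, φ z = ⊥ → ψ z = ⊥ := by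
  obtain ⟨M, hM⟩ : ∃ M : ℝ, ∀ z ∈ closedBall (0 : Fin n → ℂ) R, φ z ≤ (M : EReal) := by
    rcases (closedBall (0 : Fin n → ℂ) R).eq_empty_or_nonempty with he | hne
    · exact ⟨0, fun z hz => by rw [he] at hz; exact absurd hz (notMem_empty z)⟩
    · obtain ⟨w, hw, hwmax⟩ := UpperSemicontinuousOn.exists_isMaxOn hne
        (isCompact_closedBall _ _) (h.usc.upperSemicontinuousOn _)
      obtain ⟨M, hM, -⟩ := EReal.lt_iff_exists_real_btwn.1 (h.lt_top w)
      exact ⟨M, fun z hz => le_trans (hwmax hz) hM.le⟩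
  obtain ⟨v, hv⟩ : ∃ v : ℝ, φ a = v :=
    ⟨(φ a).toReal, (EReal.coe_toReal (h.lt_top a).ne ha).symm⟩
  have hp : 0 < 1 + |M - v| := by positivity
  set t : ℝ := δ / (1 + |M - v|) with ht
  have ht0 : 0 < t := by positivity
  refine ⟨_, h.scale t (-(t * M)) ht0, fun z hz => ?_, ?_, fun z hz => ?_⟩
  · have := (ereal_scale_le (e := φ z) (t := t) (m := -(t * M)) (x := 0) ht0).2 (by
      refine (hM z hz).trans ?_
      rw [EReal.coe_le_coe_iff]
      apply le_of_eq; field_simp; ring)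
    simpa using this
  · rw [hv, ← EReal.coe_mul, ← EReal.coe_add, EReal.coe_le_coe_iff]
    have h1 : t * (1 + |M - v|) = δ := by rw [ht]; field_simp
    nlinarith [le_abs_self (M - v)]
  · rw [hz, EReal.coe_mul_bot_of_pos ht0, EReal.bot_add]

/-- A countable union of pluripolar subsets of `ℂⁿ` is pluripolar. -/
theorem countable_union_pluripolar {n : ℕ} (E : ℕ → Set (Fin n → ℂ))
    (hE : ∀ i, Pluripolar (E i)) : Pluripolar (⋃ i, E i) := by
  choose φ hφ hne hbot using hE
  have hnull : ∀ᵐ z, ∀ i, φ i z ≠ ⊥ := by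
    rw [ae_all_iff]
    intro i
    obtain ⟨a, ha⟩ := not_forall.1 (hne i)
    exact (hφ i).null ha
  obtain ⟨a, ha⟩ := hnull.exists
  have hn := fun i : ℕ => (hφ i).normalize (ha i) i ((1 / 2) ^ i) (by positivity)
  choose ψ hψ hneg hlow hψb using hn
  set S : ℕ → (Fin n → ℂ) → EReal := fun k z => ∑ i ∈ Finset.range (k + 1), ψ i z with hS
  have hSs : ∀ k z, S (k + 1) z = S k z + ψ (k + 1) z := fun k z => Finset.sum_range_succ _ _
  have hSp : ∀ k, PlurisubharmonicOn (S k) univ := by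
    intro k
    induction k with
    | zero =>
      have : S 0 = ψ 0 := by funext z; simp [hS]
      rw [this]; exact hψ 0
    | succ k ih =>
      have : S (k + 1) = fun z => S k z + ψ (k + 1) z := funext (hSs k)
      rw [this]; exact ih.add (hψ _)
  set Φ : (Fin n → ℂ) → EReal := fun z => limsup (fun k => S k z) atTop with hΦ
  have hloc : ∀ R : ℝ, ∃ N : ℕ, ∀ z ∈ closedBall (0 : Fin n → ℂ) R,
      Antitone (fun k => S (N + k) z) ∧ Φ z = ⨅ k, S (N + k) z := by
    intro R
    obtain ⟨N, hN⟩ := exists_nat_ge R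
    refine ⟨N, fun z hz => ?_⟩
    have hanti : Antitone (fun k => S (N + k) z) := by
      refine antitone_nat_of_succ_le fun k => ?_
      rw [← add_assoc, hSs]
      have h0 : ψ (N + k + 1) z ≤ 0 := hneg _ z (closedBall_subset_closedBall (by
        push_cast; have : (0:ℝ) ≤ k := by positivity
        linarith) hz)
      calc S (N + k) z + ψ (N + k + 1) z ≤ S (N + k) z + 0 := add_le_add le_rfl h0
        _ = S (N + k) z := add_zero _
    refine ⟨hanti, ?_⟩
    have ht := tendsto_atTop_iInf hanti
    simp_rw [add_comm N] at ht ⊢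
    exact ((tendsto_add_atTop_iff_nat (f := fun k => S k z) N).1 ht).limsup_eq
  have husc : UpperSemicontinuous Φ := by
    intro x b hb
    obtain ⟨N, hN⟩ := hloc (‖x‖ + 1)
    rw [(hN x (by simp)).2, iInf_lt_iff] at hb
    obtain ⟨k, hk⟩ := hb
    filter_upwards [(hSp (N + k)).usc x b hk, closedBall_mem_nhds x one_pos] with y h1 h2
    have hy : y ∈ closedBall (0 : Fin n → ℂ) (‖x‖ + 1) := by
      rw [mem_closedBall, dist_eq_norm] at h2
      rw [mem_closedBall_zero_iff]
      calc ‖y‖ = ‖x + (y - x)‖ := by congr 1; abel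
        _ ≤ ‖x‖ + ‖y - x‖ := norm_add_le _ _
        _ ≤ _ := by linarith
    rw [(hN y hy).2]
    exact (iInf_le _ k).trans_lt h1
  refine ⟨Φ, plurisubharmonicOn_univ_of husc fun p q => ?_, ?_, ?_⟩
  · have hcont : Continuous fun z : ℂ => p + z • q := by fun_prop
    refine SubharmonicOn.limit (S := fun k z => S k (p + z • q)) (fun k => (hSp k).line p q)
      (husc.comp hcont) fun c r => ?_
    obtain ⟨R, hR⟩ := (((isCompact_closedBall c r).image hcont).isBounded).subset_closedBall
      (0 : Fin n → ℂ)
    obtain ⟨N, hN⟩ := hloc R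
    exact ⟨N, fun z hz => hN _ (hR (mem_image_of_mem _ hz))⟩
  · intro hall
    have hb : ∀ k, ((-(2 - (1 / 2) ^ k) : ℝ) : EReal) ≤ S k a := by
      intro k
      induction k with
      | zero =>
        have := hlow 0
        simp only [hS, zero_add, Finset.sum_range_one]
        convert this using 2
        norm_num
      | succ k ih =>
        rw [hSs]
        refine le_trans (le_of_eq ?_) (add_le_add ih (hlow (k + 1)))
        rw [← EReal.coe_add]
        congr 1
        ring
    obtain ⟨N, hN⟩ := hloc ‖a‖
    have h1 := (hN a (by simp)).2
    rw [hall a] at h1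
    have h2 : ((-2 : ℝ) : EReal) ≤ ⊥ := by
      rw [h1]
      refine le_iInf fun k => le_trans ?_ (hb (N + k))
      rw [EReal.coe_le_coe_iff]
      have : (0:ℝ) ≤ (1 / 2) ^ (N + k) := by positivity
      linarith
    exact EReal.coe_ne_bot _ (le_bot_iff.1 h2)
  · intro z hz
    obtain ⟨i, hi⟩ := mem_iUnion.1 hz
    have hib : ψ i z = ⊥ := hψb i z (hbot i z hi)
    have hSb : ∀ k, i ≤ k → S k z = ⊥ := by
      intro k hk
      simp only [hS]
      rw [← Finset.add_sum_erase _ _ (Finset.mem_range.2 (Nat.lt_succ_of_le hk)), hib,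
        EReal.bot_add]
    have ht : Tendsto (fun k => S k z) atTop (𝓝 ⊥) :=
      tendsto_const_nhds.congr' (by
        filter_upwards [eventually_ge_atTop i] with k hk using (hSb k hk).symm)
    exact ht.limsup_eq
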